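/- Let G be a finite simple graph on at least one vertex that is regular of odd degree d ≥ 3. Then S_max*(G) = (d+3)/2, where S_max*(G) is the minimum over all edge-decompositions of G into stars of the maximum storage of a vertex. -/

import Mathlib

open Classical

noncomputable section

variable {V : Type*}

/-- An edge-decomposition of `G` into stars: a finite collection of stars, each given by
a designated centre together with a nonempty set of edges of `G` all incident with the
centre, such that the edge sets are pairwise disjoint and cover the edge set of `G`. -/
structure StarDecomposition (G : SimpleGraph V) where
  stars : Finset (V × Finset (Sym2 V))
  star_nonempty : ∀ p ∈ stars, p.2.Nonempty
  centre_mem : ∀ p ∈ stars, ∀ e ∈ p.2, p.1 ∈ e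
  edges_sub : ∀ p ∈ stars, ∀ e ∈ p.2, e ∈ G.edgeSet
  disj : ∀ p ∈ stars, ∀ q ∈ stars, p ≠ q → Disjoint p.2 q.2
  covers : ∀ e ∈ G.edgeSet, ∃ p ∈ stars, e ∈ p.2

namespace StarDecomposition

variable {G : SimpleGraph V}

/-- The storage of a vertex `u`: the number of stars of the decomposition that contain
`u` as a vertex (as centre or leaf). -/
def storage (D : StarDecomposition G) (u : V) : ℕ :=
  (D.stars.filter fun p => ∃ e ∈ p.2, u ∈ e).card

/-- The number of stars of the decomposition in which `u` is a leaf
(a vertex other than the centre). -/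
def leafCount (D : StarDecomposition G) (u : V) : ℕ :=
  (D.stars.filter fun p => u ≠ p.1 ∧ ∃ e ∈ p.2, u ∈ e).card

/-- The total storage of a decomposition: the sum of the storages of all vertices. -/
def totalStorage [Fintype V] (D : StarDecomposition G) : ℕ :=
  ∑ u, D.storage u

end StarDecomposition

/-- `S*(G)`: the minimum total storage over all edge-decompositions of `G` into stars. -/
def SStar [Fintype V] (G : SimpleGraph V) : ℕ :=
  sInf {S | ∃ D : StarDecomposition G, D.totalStorage = S}

/-- `S_max*(G)`: the minimum, over all edge-decompositions of `G` into stars, of the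
maximum storage of a vertex. -/
def SmaxStar (G : SimpleGraph V) : ℕ :=
  sInf {k | ∃ D : StarDecomposition G, ∀ v, D.storage v ≤ k}

/-- The minimum number of stars over all edge-decompositions of `G` into stars. -/
def minStars (G : SimpleGraph V) : ℕ :=
  sInf {k | ∃ D : StarDecomposition G, D.stars.card = k}

/-- An orientation of `G`: each edge is assigned a head (one of its two endpoints);
the other endpoint is its tail. -/
structure EdgeOrientation (G : SimpleGraph V) where
  head : Sym2 V → V
  head_mem : ∀ e ∈ G.edgeSet, head e ∈ e

namespace EdgeOrientation

variable {G : SimpleGraph V}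

/-- The indegree of `v`: the number of edges whose head is `v`. -/
def indeg (o : EdgeOrientation G) (v : V) : ℕ :=
  {e | e ∈ G.edgeSet ∧ o.head e = v}.ncard

/-- The outdegree of `v`: the number of edges incident with `v` whose head is not `v`. -/
def outdeg (o : EdgeOrientation G) (v : V) : ℕ :=
  {e | e ∈ G.edgeSet ∧ v ∈ e ∧ o.head e ≠ v}.ncard

end EdgeOrientation

/-- `MMI(G)`: the minimum over all orientations of `G` of the maximum indegree. -/
def MMI (G : SimpleGraph V) : ℕ :=
  sInf {k | ∃ o : EdgeOrientation G, ∀ v, o.indeg v ≤ k}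

/-- `MMO(G)`: the minimum over all orientations of `G` of the maximum outdegree. -/
def MMO (G : SimpleGraph V) : ℕ :=
  sInf {k | ∃ o : EdgeOrientation G, ∀ v, o.outdeg v ≤ k}

/-- The independence number `α(G)`: the maximum size of a set of vertices no two of
which are adjacent. -/
def indepNum (G : SimpleGraph V) : ℕ :=
  sSup {k | ∃ s : Finset V, (∀ u ∈ s, ∀ v ∈ s, ¬ G.Adj u v) ∧ s.card = k}

end



theorem aux_orient {V : Type*} [Fintype V] (G : SimpleGraph V)
    [DecidableRel G.Adj] (k : ℕ) (hreg : G.IsRegularOfDegree (2 * k + 1)) :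
    ∃ head tail : Sym2 V → V, (∀ e ∈ G.edgeFinset, e = s(tail e, head e)) ∧
      ∀ v, (G.edgeFinset.filter fun e => head e = v).card ≤ k + 1 := by
  have hall := (Finset.all_card_le_biUnion_card_iff_exists_injective
    (fun e : G.edgeFinset => (Finset.univ.filter fun x : V × Fin (k+1) => x.1 ∈ e.1))).1 ?_
  · obtain ⟨f, hf, hfm⟩ := hall
    have h1 : ∀ e : Sym2 V, ∃ p : V × V, ∀ h : e ∈ G.edgeFinset,
        e = s(p.2, p.1) ∧ p.1 = (f ⟨e, h⟩).1 := by
      intro e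
      by_cases h : e ∈ G.edgeFinset
      · have h2 := hfm ⟨e, h⟩
        simp only [Finset.mem_filter, Finset.mem_univ, true_and] at h2
        obtain ⟨w, hw⟩ := Sym2.mem_iff_exists.1 h2
        refine ⟨((f ⟨e, h⟩).1, w), fun _ => ⟨?_, rfl⟩⟩
        rw [Sym2.eq_swap]
        exact hw
      · obtain ⟨a, b⟩ := e
        exact ⟨(a, a), fun h' => absurd h' h⟩
    choose p hp using h1
    refine ⟨fun e => (p e).1, fun e => (p e).2, fun e he => (hp e he).1, fun v => ?_⟩
    have : (G.edgeFinset.filter fun e => (p e).1 = v).card ≤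
        (Finset.univ : Finset (Fin (k+1))).card := by
      refine Finset.card_le_card_of_injOn
        (fun e => if h : e ∈ G.edgeFinset then (f ⟨e, h⟩).2 else 0) (by simp) ?_
      intro a ha b hb hab
      rw [Finset.mem_coe, Finset.mem_filter] at ha hb
      simp only [ha.1, hb.1, dif_pos] at hab
      have h3 : f ⟨a, ha.1⟩ = f ⟨b, hb.1⟩ := by
        refine Prod.ext ?_ hab
        rw [← (hp a ha.1).2, ← (hp b hb.1).2, ha.2, hb.2]
      exact congrArg Subtype.val (hf h3)
    simpa using this
  · intro s
    set t := s.biUnion (fun e : G.edgeFinset =>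
      (Finset.univ.filter fun x : V × Fin (k+1) => x.1 ∈ e.1)) with ht
    have key := Finset.card_mul_le_card_mul (s := s) (t := t)
      (fun (e : G.edgeFinset) (x : V × Fin (k+1)) => x.1 ∈ e.1)
      (m := 2 * (k+1)) (n := 2 * k + 1) ?_ ?_
    · nlinarith
    · rintro ⟨e, he⟩ hes
      have hsub : (({v | v ∈ e} : Finset V) ×ˢ (Finset.univ : Finset (Fin (k+1)))) ⊆
          t.bipartiteAbove (fun (e : G.edgeFinset) (x : V × Fin (k+1)) => x.1 ∈ e.1) ⟨e, he⟩ := by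
        rintro ⟨v, i⟩ hv
        simp only [Finset.mem_product, Finset.mem_filter, Finset.mem_univ, true_and, and_true] at hv
        simp only [Finset.mem_bipartiteAbove, ht, Finset.mem_biUnion, Finset.mem_filter,
          Finset.mem_univ, true_and]
        exact ⟨⟨_, hes, hv⟩, hv⟩
      refine le_trans ?_ (Finset.card_le_card hsub)
      rw [Finset.card_product, Finset.card_univ, Fintype.card_fin]
      refine Nat.mul_le_mul_right _ ?_
      induction e using Sym2.ind with
      | _ a b =>
        have hab : a ≠ b := by
          have : G.Adj a b := by simpa using he
          exact this.ne
        rw [← Finset.card_pair hab]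
        apply Finset.card_le_card
        intro x hx
        simpa using hx
    · rintro ⟨v, i⟩ -
      rw [← hreg v, ← G.card_incidenceFinset_eq_degree]
      refine Finset.card_le_card_of_injOn Subtype.val ?_ Subtype.val_injective.injOn
      rintro ⟨e, he⟩ hx
      simp only [Finset.coe_bipartiteBelow, Set.mem_ofPred_eq] at hx
      rw [Finset.mem_coe, SimpleGraph.mem_incidenceFinset]
      exact ⟨by simpa using he, hx.2⟩

theorem aux_upper {V : Type*} [Fintype V] (G : SimpleGraph V)
    [DecidableRel G.Adj] (k : ℕ) (hreg : G.IsRegularOfDegree (2 * k + 1)) :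
    ∃ D : StarDecomposition G, ∀ v, D.storage v ≤ k + 2 := by
  obtain ⟨head, tail, he, hc⟩ := aux_orient G k hreg
  let out : V → Finset (Sym2 V) := fun v => G.edgeFinset.filter fun e => tail e = v
  have hout : ∀ v e, e ∈ out v ↔ e ∈ G.edgeFinset ∧ tail e = v := by
    intro v e; simp only [out, Finset.mem_filter]
  have hmem : ∀ p : V × Finset (Sym2 V),
      p ∈ (Finset.univ.filter fun v => (out v).Nonempty).image (fun v => (v, out v)) ↔
      p.2 = out p.1 ∧ (out p.1).Nonempty := by
    rintro ⟨v, F⟩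
    simp only [Finset.mem_image, Finset.mem_filter, Finset.mem_univ, true_and, Prod.mk.injEq]
    constructor
    · rintro ⟨a, h1, rfl, rfl⟩; exact ⟨rfl, h1⟩
    · rintro ⟨h1, h2⟩; exact ⟨v, h2, rfl, h1.symm⟩
  refine ⟨⟨(Finset.univ.filter fun v => (out v).Nonempty).image (fun v => (v, out v)),
    ?_, ?_, ?_, ?_, ?_⟩, ?_⟩
  · intro p hp
    rw [hmem] at hp
    rw [hp.1]; exact hp.2
  · intro p hp e hep
    rw [hmem] at hp
    rw [hp.1, hout] at hep
    rw [he e hep.1, ← hep.2]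
    exact Sym2.mem_mk_left _ _
  · intro p hp e hep
    rw [hmem] at hp
    rw [hp.1, hout] at hep
    simpa using hep.1
  · intro p hp q hq hpq
    rw [hmem] at hp hq
    rw [Finset.disjoint_left]
    intro e h1 h2
    rw [hp.1, hout] at h1
    rw [hq.1, hout] at h2
    apply hpq
    have h3 : p.1 = q.1 := h1.2.symm.trans h2.2
    exact Prod.ext h3 (by rw [hp.1, hq.1, h3])
  · intro e hee
    have h1 : e ∈ out (tail e) := (hout _ _).2 ⟨by simpa using hee, rfl⟩
    exact ⟨(tail e, out (tail e)), (hmem _).2 ⟨rfl, ⟨e, h1⟩⟩, h1⟩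
  · intro u
    unfold StarDecomposition.storage
    refine le_trans (Finset.card_le_card (t := insert (u, out u)
      ((G.edgeFinset.filter fun e => head e = u).image
        (fun e => (tail e, out (tail e))))) ?_) ?_
    · intro p hp
      rw [Finset.mem_filter, hmem] at hp
      obtain ⟨⟨h1, -⟩, e, h2, h3⟩ := hp
      rw [h1, hout] at h2
      have hpe : p = (tail e, out (tail e)) := by
        refine Prod.ext h2.2.symm ?_
        rw [h1, h2.2]
      rw [he e h2.1, Sym2.mem_iff] at h3
      rw [Finset.mem_insert]
      rcases h3 with h3 | h3
      · left; rw [hpe, ← h3]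
      · right
        rw [Finset.mem_image]
        exact ⟨e, Finset.mem_filter.2 ⟨h2.1, h3.symm⟩, hpe.symm⟩
    · refine (Finset.card_insert_le _ _).trans ?_
      have := Finset.card_image_le (s := G.edgeFinset.filter fun e => head e = u)
        (f := fun e => (tail e, out (tail e)))
      have := hc u
      omega

theorem aux_lower {V : Type*} [Fintype V] [Nonempty V] (G : SimpleGraph V)
    [DecidableRel G.Adj] (k : ℕ) (hk : 1 ≤ k) (hreg : G.IsRegularOfDegree (2 * k + 1))
    (D : StarDecomposition G) (hD : ∀ v, D.storage v ≤ k + 1) : False := by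
  have hex : ∀ e : Sym2 V, ∃ p : V × Finset (Sym2 V), e ∈ G.edgeSet → p ∈ D.stars ∧ e ∈ p.2 := by
    intro e
    by_cases h : e ∈ G.edgeSet
    · obtain ⟨p, h1, h2⟩ := D.covers e h
      exact ⟨p, fun _ => ⟨h1, h2⟩⟩
    · exact ⟨(Classical.arbitrary V, ∅), fun h' => absurd h' h⟩
  choose P hP using hex
  have hleaf : ∀ v, D.leafCount v ≤ k := by
    intro v
    by_cases hv : ∃ p ∈ D.stars, p.1 = v
    · obtain ⟨p, hp, hpv⟩ := hv
      have : D.leafCount v < D.storage v := by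
        apply Finset.card_lt_card
        rw [Finset.ssubset_iff_of_subset]
        · refine ⟨p, ?_, ?_⟩
          · obtain ⟨e, h⟩ := D.star_nonempty p hp
            exact Finset.mem_filter.2 ⟨hp, e, h, hpv ▸ D.centre_mem p hp e h⟩
          · intro h
            exact (Finset.mem_filter.1 h).2.1 hpv.symm
        · intro q hq
          rw [Finset.mem_filter] at hq ⊢
          exact ⟨hq.1, hq.2.2⟩
      have := hD v
      omega
    · push Not at hv
      have h1 : (G.incidenceFinset v).card ≤ D.storage v := by
        refine Finset.card_le_card_of_injOn P ?_ ?_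
        · intro e he
          rw [Finset.mem_coe, SimpleGraph.mem_incidenceFinset] at he
          have := hP e he.1
          exact Finset.mem_coe.2 (Finset.mem_filter.2 ⟨this.1, e, this.2, he.2⟩)
        · intro a ha b hb hab
          rw [Finset.mem_coe, SimpleGraph.mem_incidenceFinset] at ha hb
          have h1 := hP a ha.1
          have h2 := hP b hb.1
          rw [← hab] at h2
          have ha' := D.centre_mem _ h1.1 _ h1.2
          have hb' := D.centre_mem _ h1.1 _ h2.2
          have hne := hv _ h1.1
          rw [(Sym2.mem_and_mem_iff hne).1 ⟨ha', ha.2⟩, (Sym2.mem_and_mem_iff hne).1 ⟨hb', hb.2⟩]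
      rw [G.card_incidenceFinset_eq_degree, hreg v] at h1
      have := hD v
      omega
  have hE : G.edgeFinset.card ≤ ∑ v, D.leafCount v := by
    have hL : ∀ e : Sym2 V, ∃ w : V, e ∈ G.edgeSet → e = s((P e).1, w) ∧ w ≠ (P e).1 := by
      intro e
      by_cases h : e ∈ G.edgeSet
      · have h1 := hP e h
        obtain ⟨w, hw⟩ := Sym2.mem_iff_exists.1 (D.centre_mem _ h1.1 _ h1.2)
        refine ⟨w, fun _ => ⟨hw, ?_⟩⟩
        rw [hw, SimpleGraph.mem_edgeSet] at h
        exact h.ne'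
      · exact ⟨Classical.arbitrary V, fun h' => absurd h' h⟩
    choose L hL using hL
    unfold StarDecomposition.leafCount
    rw [← Finset.card_sigma]
    refine Finset.card_le_card_of_injOn (fun e => ⟨L e, P e⟩) ?_ ?_
    · intro e he
      have he : e ∈ G.edgeSet := by simpa using he
      have h1 := hP e he
      have h2 := hL e he
      rw [Finset.mem_coe, Finset.mem_sigma]
      refine ⟨Finset.mem_univ _, Finset.mem_filter.2 ⟨h1.1, h2.2, e, h1.2, ?_⟩⟩
      have := Sym2.mem_mk_right (P e).1 (L e)
      rwa [← h2.1] at this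
    · intro a ha b hb hab
      have ha : a ∈ G.edgeSet := by simpa using ha
      have hb : b ∈ G.edgeSet := by simpa using hb
      simp only [Sigma.mk.injEq, heq_eq_eq] at hab
      rw [(hL a ha).1, (hL b hb).1, hab.1, hab.2]
  have hsum : ∑ v, D.leafCount v ≤ Fintype.card V * k := by
    have := Finset.sum_le_card_nsmul Finset.univ (fun v => D.leafCount v) k (fun v _ => hleaf v)
    simpa using this
  have hdeg := G.sum_degrees_eq_twice_card_edges
  rw [Finset.sum_congr rfl (fun v _ => hreg v)] at hdeg
  simp only [Finset.sum_const, Finset.card_univ, smul_eq_mul] at hdeg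
  have hpos : 0 < Fintype.card V := Fintype.card_pos
  nlinarith

/-- If `G` is regular of odd degree `d ≥ 3`, then
`S_max*(G) = (d+3)/2`. -/
theorem SmaxStar_regular_odd {V : Type*} [Fintype V] [Nonempty V] (G : SimpleGraph V)
    [DecidableRel G.Adj] (d : ℕ) (hd : Odd d) (hd3 : 3 ≤ d)
    (hreg : G.IsRegularOfDegree d) :
    SmaxStar G = (d + 3) / 2 := by
  obtain ⟨k, rfl⟩ := hd
  have h1 : (2 * k + 1 + 3) / 2 = k + 2 := by omega
  rw [h1]
  unfold SmaxStar
  apply le_antisymm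
  · exact Nat.sInf_le (aux_upper G k hreg)
  · refine le_csInf ⟨_, aux_upper G k hreg⟩ ?_
    rintro m ⟨D, hD⟩
    by_contra hm
    exact aux_lower G k (by omega) hreg D (fun v => (hD v).trans (by omega))
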